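/- Let A and B be 2×2 matrices with entries in R, with tensor components a_κ = Tr(σ_κ A) and b_κ = Tr(σ_κ B). Then for each k ∈ {1,2,3}, the k-th spin-vector component of the anticommutator satisfies Tr(σ_k {A,B}) = (1/2)( {a₀, b_k} + {a_k, b₀} + i ε_{k k₁ k₂} [a_{k₁}, b_{k₂}] ); in particular the torque term carrying one Levi-Civita symbol turns the anticommutator of matrices into a commutator of components. -/

import Mathlib

open Matrix Kronecker

/-- The Pauli matrices `σ₀ = I₂, σ₁, σ₂, σ₃`, with complex entries regarded as
elements of an associative unital `ℂ`-algebra `R` via the algebra map. -/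
noncomputable def pauli (R : Type*) [Ring R] [Algebra ℂ R] : Fin 4 → Matrix (Fin 2) (Fin 2) R
  | 0 => !![1, 0; 0, 1]
  | 1 => !![0, 1; 1, 0]
  | 2 => !![0, -(algebraMap ℂ R Complex.I); algebraMap ℂ R Complex.I, 0]
  | 3 => !![1, 0; 0, -1]

/-- The Levi-Civita symbol `ε_{ijk}` on indices in `{1,2,3}` (represented by `Fin 3`). -/
def eps (i j k : Fin 3) : ℤ :=
  ((j.val : ℤ) - i.val) * ((k.val : ℤ) - i.val) * ((k.val : ℤ) - j.val) / 2

/-! The entries of `σ_k` are central in `R`, so `σ_k` moves past the coefficients of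
`A = ½ ∑ a_κ σ_κ`. Expanding only `A` in `Tr(σ_k A B)` leaves the traces `Tr(σ_k σ_κ B)`, which the
product rule `σ_k σ_l = δ_{kl} + i ε_{klm} σ_m` turns into components of `B`. In `Tr(σ_k B A)`,
exchanging the two summed indices changes the sign of `ε`, so the two torque terms combine into a
commutator. -/

theorem eps_swap (k l m : Fin 3) : eps k m l = -eps k l m := by
  decide +revert

theorem sum_eps_smul_swap {M : Type*} [AddCommGroup M] (k : Fin 3) (f : Fin 3 → Fin 3 → M) :
    ∑ l, ∑ m, eps k l m • f m l = -∑ l, ∑ m, eps k l m • f l m := by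
  rw [Finset.sum_comm]
  simp only [← Finset.sum_neg_distrib, ← neg_smul, ← eps_swap]

theorem map_algebraMap_mul_smul {S R l m n : Type*} [CommSemiring S] [Semiring R] [Algebra S R]
    [Fintype m] (M : Matrix l m S) (x : R) (N : Matrix m n R) :
    M.map (algebraMap S R) * (x • N) = x • (M.map (algebraMap S R) * N) := by
  ext i j
  simp only [mul_apply, map_apply, Matrix.smul_apply, smul_eq_mul, Finset.mul_sum,
    Algebra.left_comm]

section Pauli

variable {R : Type*} [Ring R] [Algebra ℂ R]

theorem algebraMap_I_mul_self :
    algebraMap ℂ R Complex.I * algebraMap ℂ R Complex.I = -1 := by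
  rw [← map_mul, Complex.I_mul_I, map_neg, map_one]

theorem pauli_zero : pauli R 0 = 1 :=
  one_fin_two.symm

theorem map_algebraMap_pauli (κ : Fin 4) : (pauli ℂ κ).map (algebraMap ℂ R) = pauli R κ := by
  fin_cases κ <;> ext i j <;> fin_cases i <;> fin_cases j <;> simp [pauli]

theorem pauli_mul_smul (κ : Fin 4) (x : R) (M : Matrix (Fin 2) (Fin 2) R) :
    pauli R κ * (x • M) = x • (pauli R κ * M) := by
  simpa only [map_algebraMap_pauli] using map_algebraMap_mul_smul (pauli ℂ κ) x M

theorem pauli_succ_mul_pauli_succ (k l : Fin 3) :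
    pauli R k.succ * pauli R l.succ =
      (if k = l then 1 else 0) + Complex.I • ∑ m, eps k l m • pauli R m.succ := by
  fin_cases k <;> fin_cases l <;>
    simp [pauli, eps, Fin.sum_univ_three, one_fin_two, Algebra.smul_def (A := R),
      algebraMap_I_mul_self]

theorem sum_smul_pauli (x : Fin 4 → R) :
    ∑ κ, x κ • pauli R κ =
      !![x 0 + x 3, x 1 - x 2 * algebraMap ℂ R Complex.I;
        x 1 + x 2 * algebraMap ℂ R Complex.I, x 0 - x 3] := by
  simp [Fin.sum_univ_four, pauli, sub_eq_add_neg]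

/-- The tensor component `a_κ = Tr(σ_κ A)` of a `2 × 2` matrix: scalar for `κ = 0`, spin-vector
for `κ = 1, 2, 3`. -/
noncomputable def tensorComponent (A : Matrix (Fin 2) (Fin 2) R) (κ : Fin 4) : R :=
  (pauli R κ * A).trace

theorem tensorComponent_zero (A : Matrix (Fin 2) (Fin 2) R) :
    tensorComponent A 0 = A 0 0 + A 1 1 := by
  rw [tensorComponent, pauli_zero, one_mul, trace_fin_two]

theorem tensorComponent_one (A : Matrix (Fin 2) (Fin 2) R) :
    tensorComponent A 1 = A 1 0 + A 0 1 := by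
  simp [tensorComponent, pauli, trace_fin_two, vecMul, dotProduct]

theorem tensorComponent_two (A : Matrix (Fin 2) (Fin 2) R) :
    tensorComponent A 2 = Complex.I • (A 0 1 - A 1 0) := by
  simp [tensorComponent, pauli, trace_fin_two, vecMul, dotProduct, Algebra.smul_def, mul_sub,
    neg_add_eq_sub]

theorem tensorComponent_three (A : Matrix (Fin 2) (Fin 2) R) :
    tensorComponent A 3 = A 0 0 - A 1 1 := by
  simp [tensorComponent, pauli, trace_fin_two, vecMul, dotProduct, sub_eq_add_neg]

theorem eq_half_smul_sum_tensorComponent_smul_pauli (A : Matrix (Fin 2) (Fin 2) R) :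
    A = (1 / 2 : ℂ) • ∑ κ, tensorComponent A κ • pauli R κ := by
  have I_smul_mul_I (x : R) : Complex.I • (x * algebraMap ℂ R Complex.I) = -x := by
    rw [← Algebra.commutes, ← Algebra.smul_def, smul_smul, Complex.I_mul_I, neg_one_smul]
  rw [one_div, eq_inv_smul_iff₀ two_ne_zero, two_smul, sum_smul_pauli, tensorComponent_zero,
    tensorComponent_one, tensorComponent_two, tensorComponent_three, smul_mul_assoc,
    I_smul_mul_I, eta_fin_two (A + A)]
  simp only [Matrix.add_apply, neg_sub, add_add_sub_cancel, add_sub_sub_cancel]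

theorem trace_pauli_succ_mul_pauli_succ_mul (k l : Fin 3) (B : Matrix (Fin 2) (Fin 2) R) :
    (pauli R k.succ * pauli R l.succ * B).trace =
      (if k = l then tensorComponent B 0 else 0) +
        Complex.I • ∑ m, eps k l m • tensorComponent B m.succ := by
  simp only [pauli_succ_mul_pauli_succ, add_mul, ite_mul, zero_mul, smul_mul_assoc, Finset.sum_mul,
    trace_add, trace_smul, trace_sum, apply_ite trace, trace_zero, tensorComponent, pauli_zero]

theorem tensorComponent_mul (A B : Matrix (Fin 2) (Fin 2) R) (κ : Fin 4) :
    tensorComponent (A * B) κ =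
      (1 / 2 : ℂ) • ∑ μ, tensorComponent A μ * (pauli R κ * pauli R μ * B).trace := by
  conv_lhs => rw [eq_half_smul_sum_tensorComponent_smul_pauli A]
  simp only [tensorComponent, ← mul_assoc, mul_smul_comm, Finset.mul_sum, pauli_mul_smul,
    smul_mul_assoc, Finset.sum_mul, trace_smul, trace_sum, smul_eq_mul]

theorem tensorComponent_mul_succ (A B : Matrix (Fin 2) (Fin 2) R) (k : Fin 3) :
    tensorComponent (A * B) k.succ =
      (1 / 2 : ℂ) •
        (tensorComponent A 0 * tensorComponent B k.succ +
          tensorComponent A k.succ * tensorComponent B 0 +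
          Complex.I • ∑ l, ∑ m,
            eps k l m • (tensorComponent A l.succ * tensorComponent B m.succ)) := by
  have scalar_term : (pauli R k.succ * pauli R 0 * B).trace = tensorComponent B k.succ := by
    rw [pauli_zero, mul_one, tensorComponent]
  rw [tensorComponent_mul, Fin.sum_univ_succ, scalar_term]
  simp only [trace_pauli_succ_mul_pauli_succ_mul, mul_add, mul_ite, mul_zero, mul_smul_comm,
    Finset.mul_sum, Finset.sum_add_distrib, Finset.sum_ite_eq, Finset.mem_univ, if_true,
    ← Finset.smul_sum, add_assoc]

end Pauli

/-- Spin-vector component of the anticommutator of two 2×2 matrices over a `ℂ`-algebra: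
`Tr(σ_k {A,B}) = (1/2)({a₀,b_k} + {a_k,b₀} + i ε_{k k₁ k₂} [a_{k₁}, b_{k₂}])`;
the torque term with one Levi-Civita symbol is a commutator of components. -/
theorem spinor_anticommutator_vector (R : Type*) [Ring R] [Algebra ℂ R]
    (A B : Matrix (Fin 2) (Fin 2) R) (a b : Fin 4 → R)
    (ha : ∀ κ : Fin 4, a κ = (pauli R κ * A).trace)
    (hb : ∀ κ : Fin 4, b κ = (pauli R κ * B).trace) :
    ∀ k : Fin 3,
      (pauli R k.succ * (A * B + B * A)).trace =
        (1/2 : ℂ) •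
          ((a 0 * b k.succ + b k.succ * a 0) + (a k.succ * b 0 + b 0 * a k.succ)
            + algebraMap ℂ R Complex.I *
                ∑ k₁ : Fin 3, ∑ k₂ : Fin 3,
                  ((eps k k₁ k₂ : ℤ) : R) *
                    (a k₁.succ * b k₂.succ - b k₂.succ * a k₁.succ)) := by
  obtain rfl : a = tensorComponent A := funext ha
  obtain rfl : b = tensorComponent B := funext hb
  intro k
  have torque_swap := sum_eps_smul_swap k fun l m ↦
    tensorComponent B m.succ * tensorComponent A l.succ
  rw [mul_add, trace_add, ← tensorComponent, ← tensorComponent, tensorComponent_mul_succ,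
    tensorComponent_mul_succ, torque_swap]
  simp only [← Algebra.smul_def, ← zsmul_eq_mul, smul_sub, Finset.sum_sub_distrib]
  module
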